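/- (Andrews' identity; Gessel–Stanton (1.1).) Let n be a natural number and a ∈ ℂ such that (3a/2)_k ≠ 0 and ((3a+1)/2)_k ≠ 0 for all 0 ≤ k ≤ n, and (3a+1)_n ≠ 0. Then ∑_{k=0}^{n} ((−n)_k (n+3a)_k (a)_k)/((3a/2)_k ((3a+1)/2)_k · k!) · (3/4)^k equals 0 if n is not divisible by 3, and equals (n! · (a+1)_{n/3})/((n/3)! · (3a+1)_n) if 3 divides n. -/

import Mathlib

/-- Pochhammer symbol (shifted factorial) of a complex number. -/
noncomputable def poch (a : ℂ) (k : ℕ) : ℂ := ∏ j ∈ Finset.range k, (a + j)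

open Polynomial in
theorem poch_eq_eval (a : ℂ) (k : ℕ) : poch a k = (ascPochhammer ℂ k).eval a := by
  induction k with
  | zero => simp [poch]
  | succ k ih =>
    rw [ascPochhammer_succ_eval, ← ih]
    simp [poch, Finset.prod_range_succ]

theorem poch_succ (a : ℂ) (k : ℕ) : poch a (k + 1) = poch a k * (a + k) := by
  simp [poch, Finset.prod_range_succ]

theorem poch_add (a : ℂ) (k m : ℕ) : poch a (k + m) = poch a k * poch (a + k) m := by
  simp [poch, Finset.prod_range_add, add_assoc]

theorem poch_neg_nat (N k : ℕ) :
    poch (-(N : ℂ)) k = (-1) ^ k * (k.factorial : ℂ) * (N.choose k : ℂ) := by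
  rw [poch_eq_eval, ascPochhammer_eval_neg_eq_descPochhammer, descPochhammer_eval_eq_descFactorial,
    Nat.descFactorial_eq_factorial_mul_choose]
  push_cast
  ring

theorem poch_double (b : ℂ) (k : ℕ) :
    poch (b / 2) k * poch ((b + 1) / 2) k * 4 ^ k = poch b (2 * k) := by
  induction k with
  | zero => simp [poch]
  | succ k ih =>
    rw [show 2 * (k + 1) = 2 * k + 1 + 1 by ring, poch_succ, poch_succ, poch_succ, poch_succ, ← ih]
    push_cast
    ring

open Polynomial in
theorem coeff_one_sub_X_pow' (M j : ℕ) :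
    ((1 - X : ℂ[X]) ^ M).coeff j = (-1) ^ j * (M.choose j : ℂ) := by
  have h : (1 - X : ℂ[X]) ^ M = ((1 + X : ℂ[X]) ^ M).comp (C (-1) * X) := by
    simp [sub_eq_add_neg]
  rw [h, comp_C_mul_X_coeff, coeff_one_add_X_pow]
  ring

open Polynomial in
theorem nat_case (n N : ℕ) :
    ∑ k ∈ Finset.range (n + 1), (3 : ℂ) ^ k * (N.choose k : ℂ) *
      ((-1) ^ (n - k) * ((3 * N - 2 * k).choose (n - k) : ℂ)) =
    if 3 ∣ n then (-1) ^ (n / 3) * (N.choose (n / 3) : ℂ) else 0 := by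
  have key : (expand ℂ 3 ((1 - X) ^ N)) =
      ∑ k ∈ Finset.range (N + 1),
        C ((3 : ℂ) ^ k * (N.choose k : ℂ)) * ((1 - X) ^ (3 * N - 2 * k) * X ^ k) := by
    have e : (expand ℂ 3 ((1 - X) ^ N)) = (3 * X * (1 - X) + (1 - X) ^ 3) ^ N := by
      rw [map_pow]
      congr 1
      simp
      ring
    rw [e, add_pow]
    refine Finset.sum_congr rfl fun k hk => ?_
    have hk : k ≤ N := by simpa [Nat.lt_succ_iff] using hk
    rw [show 3 * N - 2 * k = k + 3 * (N - k) by omega]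
    simp only [map_mul, map_pow, map_natCast, mul_pow, pow_add, pow_mul]
    rw [show (C (3 : ℂ)) = 3 from rfl]
    ring
  have h2 := congrArg (fun p => coeff p n) key
  simp only [coeff_expand (by norm_num : 0 < 3), coeff_one_sub_X_pow', finsetSum_coeff,
    coeff_C_mul, coeff_mul_X_pow'] at h2
  rw [h2]
  set f : ℕ → ℂ := fun k => (3 : ℂ) ^ k * (N.choose k : ℂ) *
    (if k ≤ n then (-1) ^ (n - k) * ((3 * N - 2 * k).choose (n - k) : ℂ) else 0) with hf
  trans ∑ k ∈ Finset.range (n + 1), f k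
  · refine Finset.sum_congr rfl fun k hk => ?_
    have hk : k ≤ n := by simpa [Nat.lt_succ_iff] using hk
    simp [hf, hk]
  trans ∑ k ∈ Finset.range (n + N + 1), f k
  · refine Finset.sum_subset (by intro x; simp; omega) fun k _ hk => ?_
    have hk : ¬ k ≤ n := by simpa [Nat.lt_succ_iff] using hk
    simp [hf, hk]
  · symm
    refine Finset.sum_subset (by intro x; simp; omega) fun k _ hk => ?_
    have hk : N < k := by simpa [Nat.lt_succ_iff] using hk
    simp [hf, Nat.choose_eq_zero_of_lt hk]

open Polynomial in
theorem poly_case (n : ℕ) (a : ℂ) :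
    ∑ k ∈ Finset.range (n + 1), (-3 : ℂ) ^ k * (poch a k / (k.factorial : ℂ)) *
      (poch (3 * a + 2 * k) (n - k) / ((n - k).factorial : ℂ)) =
    if 3 ∣ n then poch a (n / 3) / ((n / 3).factorial : ℂ) else 0 := by
  let P : ℂ[X] := ∑ k ∈ Finset.range (n + 1), C ((-3 : ℂ) ^ k) *
    (ascPochhammer ℂ k * C ((k.factorial : ℂ)⁻¹)) *
      ((ascPochhammer ℂ (n - k)).comp (C 3 * X + C (2 * (k : ℂ))) * C (((n - k).factorial : ℂ)⁻¹))
  let Q : ℂ[X] := if 3 ∣ n then ascPochhammer ℂ (n / 3) * C (((n / 3).factorial : ℂ)⁻¹) else 0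
  have hP : ∀ z, P.eval z = ∑ k ∈ Finset.range (n + 1), (-3 : ℂ) ^ k *
      (poch z k / (k.factorial : ℂ)) *
      (poch (3 * z + 2 * k) (n - k) / ((n - k).factorial : ℂ)) := by
    intro z
    simp only [P, eval_finsetSum, eval_mul, eval_C, eval_comp, eval_add, eval_X, poch_eq_eval,
      div_eq_mul_inv]
  have hQ : ∀ z, Q.eval z =
      if 3 ∣ n then poch z (n / 3) / ((n / 3).factorial : ℂ) else 0 := by
    intro z
    simp only [Q]
    split_ifs <;> simp [poch_eq_eval, div_eq_mul_inv]
  have hPQ : P = Q := by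
    refine Polynomial.eq_of_infinite_eval_eq P Q ?_
    refine (Set.infinite_range_of_injective (f := fun N : ℕ => -(N : ℂ)) ?_).mono ?_
    · intro x y h
      simpa using h
    rintro _ ⟨N, rfl⟩
    simp only [Set.mem_ofPred_eq, hP, hQ]
    have fac : ∀ m : ℕ, (m.factorial : ℂ) ≠ 0 := fun m => by exact_mod_cast m.factorial_ne_zero
    have hb : ∀ M j : ℕ, poch (-(M : ℂ)) j / (j.factorial : ℂ) = (-1) ^ j * (M.choose j : ℂ) := by
      intro M j
      rw [poch_neg_nat]
      field_simp [fac j]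
    simp only [hb]
    rw [← nat_case]
    refine Finset.sum_congr rfl fun k _ => ?_
    by_cases hk : k ≤ N
    · have : 3 * -(N : ℂ) + 2 * k = -((3 * N - 2 * k : ℕ) : ℂ) := by
        rw [Nat.cast_sub (by omega)]
        push_cast
        ring
      rw [this, hb, show (-3 : ℂ) = 3 * (-1) by norm_num, mul_pow]
      have h1 : ((-1 : ℂ) ^ k) * (-1) ^ k = 1 := by rw [← mul_pow]; simp
      linear_combination (3 : ℂ) ^ k * (N.choose k : ℂ) *
        ((-1) ^ (n - k) * ((3 * N - 2 * k).choose (n - k) : ℂ)) * h1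
    · simp [Nat.choose_eq_zero_of_lt (not_le.mp hk)]
  rw [← hP, ← hQ, hPQ]

/-- Andrews' identity (Gessel–Stanton (1.1)). -/
theorem andrews_gessel_stanton_1_1 (n : ℕ) (a : ℂ)
    (h1 : ∀ k ≤ n, poch (3 * a / 2) k ≠ 0)
    (h2 : ∀ k ≤ n, poch ((3 * a + 1) / 2) k ≠ 0)
    (hn : poch (3 * a + 1) n ≠ 0) :
    ∑ k ∈ Finset.range (n + 1),
        poch (-(n : ℂ)) k * poch ((n : ℂ) + 3 * a) k * poch a k /
          (poch (3 * a / 2) k * poch ((3 * a + 1) / 2) k * (k.factorial : ℂ)) *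
          (3 / 4 : ℂ) ^ k
      = if 3 ∣ n then
          (n.factorial : ℂ) * poch (a + 1) (n / 3) /
            (((n / 3).factorial : ℂ) * poch (3 * a + 1) n)
        else 0 := by
  rcases Nat.eq_zero_or_pos n with rfl | hpos
  · simp [poch]
  have fac : ∀ m : ℕ, (m.factorial : ℂ) ≠ 0 := fun m => by exact_mod_cast m.factorial_ne_zero
  have hd : ∀ k ≤ n, poch (3 * a) (2 * k) ≠ 0 := by
    intro k hk
    rw [← poch_double]
    exact mul_ne_zero (mul_ne_zero (h1 k hk) (h2 k hk)) (pow_ne_zero _ (by norm_num))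
  have h3n : poch (3 * a) n ≠ 0 := by
    have := hd n le_rfl
    rw [two_mul, poch_add] at this
    exact left_ne_zero_of_mul this
  have ha : a ≠ 0 := by
    have := h1 1 hpos
    intro h
    simp [poch, h] at this
  trans (n.factorial : ℂ) / poch (3 * a) n *
      ∑ k ∈ Finset.range (n + 1), (-3 : ℂ) ^ k * (poch a k / (k.factorial : ℂ)) *
      (poch (3 * a + 2 * k) (n - k) / ((n - k).factorial : ℂ))
  · rw [Finset.mul_sum]
    refine Finset.sum_congr rfl fun k hk => ?_
    have hk : k ≤ n := by simpa [Nat.lt_succ_iff] using hk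
    have e1 : poch (3 * a) n * poch ((n : ℂ) + 3 * a) k =
        poch (3 * a) (2 * k) * poch (3 * a + 2 * k) (n - k) := by
      have x1 := poch_add (3 * a) n k
      have x2 := poch_add (3 * a) (2 * k) (n - k)
      rw [show 2 * k + (n - k) = n + k by omega] at x2
      push_cast at x2
      rw [add_comm (n : ℂ), ← x1, ← x2]
    have e2 : (n.choose k : ℂ) * k.factorial * (n - k).factorial = n.factorial := by
      exact_mod_cast Nat.choose_mul_factorial_mul_factorial hk
    have e3 := poch_double (3 * a) k
    have e4 := hd k hk
    have n1 := h1 k hk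
    have n2 := h2 k hk
    have e5 : poch ((n : ℂ) + 3 * a) k =
        poch (3 * a / 2) k * poch ((3 * a + 1) / 2) k * 4 ^ k *
          poch (3 * a + 2 * k) (n - k) / poch (3 * a) n := by
      rw [e3, ← e1]
      field_simp
    rw [poch_neg_nat, e5, ← e2, show (-3 : ℂ) = (-1) * 3 by norm_num, mul_pow, div_pow]
    have f1 := fac k
    have f2 := fac (n - k)
    field_simp
  · rw [poly_case]
    split_ifs with h
    · obtain ⟨m, rfl⟩ := h
      rw [Nat.mul_div_cancel_left m (by norm_num)]
      have s : ∀ (b : ℂ) (j : ℕ), b * poch (b + 1) j = poch b j * (b + j) := by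
        intro b j
        rw [← poch_succ, add_comm j 1, poch_add]
        simp [poch]
      have s1 := s a m
      have s2 := s (3 * a) (3 * m)
      push_cast at s2
      have f := fac m
      have ham : a + m ≠ 0 := by
        intro h0
        have : 3 * a + 3 * (m : ℂ) = 0 := by linear_combination 3 * h0
        rw [this, mul_zero] at s2
        exact mul_ne_zero (mul_ne_zero three_ne_zero ha) hn s2
      have q1 : poch (a + 1) m = poch a m * (a + m) / a := by
        rw [← s1]; field_simp
      have q2 : poch (3 * a + 1) (3 * m) = poch (3 * a) (3 * m) * (a + m) / a := by
        rw [eq_div_iff ha]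
        linear_combination s2 / 3
      rw [q1, q2]
      field_simp
    · simp
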